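/- Let p, q : F₂ → ℤ each be a finite ℤ-linear combination of indicator functions of sets belonging to 𝒩 ∪ 𝓜. Then (p + q) − (a·p + b·q) is finitely supported if and only if there exist integers n, m, k, l ∈ ℤ such that p − (n·1 + m·1_R) and q − (k·1 + l·1_{R'}) are finitely supported, where R = B(b) ∪ (⋃_{k≥1} B(a^k*b)) ∪ (B(a⁻¹) \ ⋃_{k≥1} B(a^{−k}*b⁻¹)) and R' = B(a) ∪ (⋃_{k≥1} B(b^k*a)) ∪ (B(b⁻¹) \ ⋃_{k≥1} B(b^{−k}*a⁻¹)). -/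

import Mathlib

open scoped Pointwise

/-- The free group on two generators. -/
abbrev F₂ := FreeGroup Bool

/-- The generator `a`. -/
def ga : F₂ := FreeGroup.of true

/-- The generator `b`. -/
def gb : F₂ := FreeGroup.of false

/-- The word length `|w|` of an element of the free group. -/
def wl (w : F₂) : ℕ := w.toWord.length

/-- The cylinder set `B(t)` of elements whose reduced word begins with the reduced word of `t`. -/
def cyl (t : F₂) : Set F₂ := {x | ∃ y : F₂, x = t * y ∧ wl x = wl t + wl y}
/-- The translate `g·f` of a function, `(g·f)(x) = f(g⁻¹x)`. -/
def tr (g : F₂) (f : F₂ → ℤ) : F₂ → ℤ := fun x => f (g⁻¹ * x)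

/-- The integer-valued indicator function of a set. -/
noncomputable def ind (S : Set F₂) : F₂ → ℤ := S.indicator 1

/-- A function is finitely supported if it vanishes outside a finite set. -/
def FinSupp (f : F₂ → ℤ) : Prop := (Function.support f).Finite

/-- `altProd c d [k₁, …, k_M] = c^{k₁} * d^{k₂} * c^{k₃} * ⋯` (alternating powers,
starting with `c`). -/
def altProd : F₂ → F₂ → List ℕ → F₂
  | _, _, [] => 1
  | c, d, k :: ks => c ^ k * altProd d c ks

/-- The family `𝒩_c` (for the ordered pair of letters `(c, d)`): all sets
`⋃_{k₁,…,k_M ≥ 1} B(y c^{k₁} d^{k₂} ⋯ z)` with `M ≥ 1`, `z = d` if `M` is odd and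
`z = c` if `M` is even, and `y` an element whose reduced word does not end in `c⁻¹`. -/
def Ncd (c d : F₂) : Set (Set F₂) :=
  {S | ∃ (y : F₂) (M : ℕ), 1 ≤ M ∧ wl (y * c) = wl y + 1 ∧
    S = ⋃ ks ∈ {l : List ℕ | l.length = M ∧ ∀ k ∈ l, 1 ≤ k},
          cyl (y * altProd c d ks * (if M % 2 = 1 then d else c))}

/-- `𝒩`, the family of cylinder sets `B(t)`, `t ≠ e`. -/
def Nfam : Set (Set F₂) := {S | ∃ t : F₂, t ≠ 1 ∧ S = cyl t}

/-- `𝓜 = 𝒩_a ∪ 𝒩_b ∪ 𝒩_{a⁻¹} ∪ 𝒩_{b⁻¹}`. -/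
def Mfam : Set (Set F₂) := Ncd ga gb ∪ Ncd gb ga ∪ Ncd ga⁻¹ gb⁻¹ ∪ Ncd gb⁻¹ ga⁻¹

/-- The set `R = B(b) ∪ (⋃_{k≥1} B(aᵏb)) ∪ (B(a⁻¹) \ ⋃_{k≥1} B(a⁻ᵏb⁻¹))`. -/
def Rset : Set F₂ :=
  cyl gb ∪ (⋃ k ∈ {k : ℕ | 1 ≤ k}, cyl (ga ^ k * gb)) ∪
    (cyl ga⁻¹ \ ⋃ k ∈ {k : ℕ | 1 ≤ k}, cyl (ga⁻¹ ^ k * gb⁻¹))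

/-- The set `R' = B(a) ∪ (⋃_{k≥1} B(bᵏa)) ∪ (B(b⁻¹) \ ⋃_{k≥1} B(b⁻ᵏa⁻¹))`. -/
def Rset' : Set F₂ :=
  cyl ga ∪ (⋃ k ∈ {k : ℕ | 1 ≤ k}, cyl (gb ^ k * ga)) ∪
    (cyl gb⁻¹ \ ⋃ k ∈ {k : ℕ | 1 ≤ k}, cyl (gb⁻¹ ^ k * ga⁻¹))


/-! ## Combinatorial core on words -/

abbrev Ltr := Bool × Bool

/-- reduced words -/
abbrev Rd (l : List Ltr) : Prop := FreeGroup.IsReduced l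

/-- number of letter changes in a word -/
def ch : List Ltr → ℕ
  | [] => 0
  | [_] => 0
  | s :: t :: l => (if s = t then 0 else 1) + ch (t :: l)

structure GoodK (K : ℕ) (f : List Ltr → ℤ) : Prop where
  pump : ∀ (u : List Ltr) (c : Ltr) (x : List Ltr), K ≤ u.length →
    f (u ++ c :: c :: x) = f (u ++ c :: x)
  sgn : ∀ (u : List Ltr) (c e : Ltr) (w : List Ltr), K ≤ u.length → c.1 ≠ e.1 → c.2 ≠ e.2 →
    f (u ++ c :: e :: w) = f (u ++ [c])
  runs : ∀ (x : List Ltr) (h : Ltr), K ≤ ch x → f (x ++ [h]) = f x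

theorem ch_le_cons (s : Ltr) (l : List Ltr) : ch l ≤ ch (s :: l) := by
  cases l with
  | nil => simp [ch]
  | cons t l => simp [ch]

theorem ch_cons_le (s : Ltr) (l : List Ltr) : ch (s :: l) ≤ ch l + 1 := by
  cases l with
  | nil => simp [ch]
  | cons t l => simp only [ch]; split <;> omega

theorem ch_same (s : Ltr) (l : List Ltr) : ch (s :: s :: l) = ch (s :: l) := by
  simp [ch]

theorem ch_ne {s t : Ltr} (h : s ≠ t) (l : List Ltr) : ch (s :: t :: l) = ch (t :: l) + 1 := by
  simp [ch, h]; omega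

theorem ch_rep (c d : Ltr) (h : c ≠ d) (k : ℕ) (v : List Ltr) :
    ch (List.replicate (k+1) c ++ d :: v) = ch (d :: v) + 1 := by
  induction k with
  | zero => simp [ch_ne h]
  | succ k ih => rw [List.replicate_succ, List.replicate_succ, List.cons_append, List.cons_append, ch_same]
                 simpa [List.replicate_succ] using ih

theorem ch_rep' (d : Ltr) (k : ℕ) (v : List Ltr) :
    ch (List.replicate k d ++ d :: v) = ch (d :: v) := by
  induction k with
  | zero => simp
  | succ k ih =>
    cases k with
    | zero => simp [ch_same]
    | succ k =>
      rw [List.replicate_succ, List.replicate_succ, List.cons_append, List.cons_append, ch_same]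
      simpa [List.replicate_succ] using ih

theorem rd_same (c : Ltr) (l : List Ltr) : Rd (c :: c :: l) ↔ Rd (c :: l) := by
  simp [Rd, FreeGroup.IsReduced, List.isChain_cons_cons]

theorem rd_ne {c d : Ltr} (h : c.1 ≠ d.1) (l : List Ltr) : Rd (c :: d :: l) ↔ Rd (d :: l) := by
  simp [Rd, FreeGroup.IsReduced, List.isChain_cons_cons, h]

theorem rd_tail {c : Ltr} {l : List Ltr} (h : Rd (c :: l)) : Rd l := by
  exact List.IsChain.tail h

theorem rd_rep' (d : Ltr) (k : ℕ) (v : List Ltr) :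
    Rd (List.replicate k d ++ d :: v) ↔ Rd (d :: v) := by
  induction k with
  | zero => simp
  | succ k ih =>
    cases k with
    | zero => simp
    | succ k =>
      rw [List.replicate_succ, List.replicate_succ, List.cons_append, List.cons_append, rd_same]
      simpa [List.replicate_succ] using ih

theorem rd_rep {c d : Ltr} (h : c.1 ≠ d.1) (k : ℕ) (v : List Ltr) :
    Rd (List.replicate k c ++ d :: v) ↔ Rd (d :: v) := by
  cases k with
  | zero => simp
  | succ k =>
    rw [List.replicate_succ', List.append_assoc]
    simp only [List.cons_append, List.nil_append]
    rw [rd_rep', rd_ne h]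

/-- decomposition of a reduced word by its first run -/
theorem run_decomp (c : Ltr) (l : List Ltr) (h : Rd (c :: l)) :
    ∃ k, c :: l = List.replicate (k+1) c ∨
      ∃ d v, d.1 ≠ c.1 ∧ c :: l = List.replicate (k+1) c ++ d :: v := by
  induction l with
  | nil => exact ⟨0, Or.inl rfl⟩
  | cons t l ih =>
    by_cases htc : t = c
    · subst htc
      obtain ⟨k, hk⟩ := ih (rd_tail h)
      refine ⟨k+1, ?_⟩
      rcases hk with hk | ⟨d, v, hd, hk⟩
      · left; rw [hk]; rfl
      · right; refine ⟨d, v, hd, ?_⟩; rw [hk]; rfl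
    · refine ⟨0, Or.inr ⟨t, l, ?_, rfl⟩⟩
      intro h1
      simp only [Rd, FreeGroup.IsReduced, List.isChain_cons_cons] at h
      exact htc (Prod.ext h1 (h.1 h1.symm).symm)

structure WFlow (K N : ℕ) (f : List Ltr → ℤ) : Prop extends GoodK K f where
  cons : ∀ (s : Ltr) (l : List Ltr), Rd (s :: l) → N ≤ (s :: l).length →
    f (s :: l) = f (s :: s :: l) + f ((!s.1, true) :: s :: l) + f ((!s.1, false) :: s :: l)

section
variable {K N : ℕ} {f : List Ltr → ℤ}

theorem rep_cons (c : Ltr) (k : ℕ) (x : List Ltr) :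
    List.replicate k c ++ c :: x = c :: (List.replicate k c ++ x) := by
  rw [← List.cons_append, ← List.replicate_succ, List.replicate_succ']
  simp

/-- pump a run after a long prefix -/
theorem GoodK.pumps (hf : GoodK K f) (u : List Ltr) (c : Ltr) (x : List Ltr) (hu : K ≤ u.length)
    (i : ℕ) : f (u ++ (List.replicate i c ++ c :: x)) = f (u ++ c :: x) := by
  induction i with
  | zero => simp
  | succ i ih =>
    rw [← ih, List.replicate_succ, List.cons_append, rep_cons, hf.pump u c _ hu]

/-- Step A -/
theorem WFlow.stepA (hf : WFlow K N f) (h : Ltr) : ∀ (n : ℕ) (x : List Ltr), K ≤ ch x + n → 1 ≤ ch x →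
    Rd (x ++ [h]) → N ≤ x.length → f (x ++ [h]) = f x := by
  intro n
  induction n with
  | zero => intro x hx _ _ _; exact hf.runs x h (by simpa using hx)
  | succ n ih =>
    -- invariance under extending the first run
    have ext1 : ∀ (c : Ltr) (l : List Ltr), K ≤ ch (c :: l) + (n+1) → 1 ≤ ch (c :: l) →
        Rd (c :: l ++ [h]) → N ≤ (c :: l).length → ∀ i,
        f (List.replicate i c ++ (c :: l) ++ [h]) - f (List.replicate i c ++ (c :: l))
          = f (c :: l ++ [h]) - f (c :: l) := by
      intro c l h1 h2 h3 h4 i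
      induction i with
      | zero => simp
      | succ i ihi =>
        rw [← ihi]
        have hr : Rd (List.replicate i c ++ c :: (l ++ [h])) := (rd_rep' c i _).2 (by simpa using h3)
        have hr2 : Rd (List.replicate i c ++ c :: l) := by
          have : List.replicate i c ++ c :: (l ++ [h]) = (List.replicate i c ++ c :: l) ++ [h] := by simp
          rw [this] at hr
          exact List.IsChain.left_of_append hr
        have hch := ch_rep' c i l
        rw [rep_cons] at hr hr2 hch
        have hlen : N ≤ (c :: (List.replicate i c ++ l)).length := by simp at h4 ⊢; omega
        have e1 := hf.cons c _ hr (by simp at h4 ⊢; omega)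
        have e2 := hf.cons c _ hr2 hlen
        have key : ∀ b : Bool, f ((!c.1, b) :: c :: (List.replicate i c ++ (l ++ [h])))
            = f ((!c.1, b) :: c :: (List.replicate i c ++ l)) := by
          intro b
          have hne : ((!c.1, b) : Ltr).1 ≠ c.1 := by simp
          have hne' : ((!c.1, b) : Ltr) ≠ c := fun hh => hne (by rw [hh])
          have := ih ((!c.1, b) :: c :: (List.replicate i c ++ l))
            (by rw [ch_ne hne']; omega) (by rw [ch_ne hne']; omega)
            (by simp only [List.cons_append, List.append_assoc]; exact (rd_ne hne _).2 hr)
            (by simp at h4 ⊢; omega)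
          simpa using this
        have k1 := key true
        have k2 := key false
        have r1 : List.replicate (i+1) c ++ (c :: l) ++ [h] = c :: c :: (List.replicate i c ++ (l ++ [h])) := by
          simp [List.replicate_succ, rep_cons]
        have r2 : List.replicate (i+1) c ++ (c :: l) = c :: c :: (List.replicate i c ++ l) := by
          simp [List.replicate_succ, rep_cons]
        have r3 : List.replicate i c ++ (c :: l) ++ [h] = c :: (List.replicate i c ++ (l ++ [h])) := by
          simp [rep_cons]
        have r4 : List.replicate i c ++ (c :: l) = c :: (List.replicate i c ++ l) := by
          simp [rep_cons]
        rw [r1, r2, r3, r4]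
        omega
    intro x hx1 hx2 hx3 hx4
    cases x with
    | nil => simp [ch] at hx2
    | cons c l =>
      have hrl : Rd (c :: l) := List.IsChain.left_of_append hx3
      obtain ⟨j, hj | ⟨d, v, hdc, hj⟩⟩ := run_decomp c l hrl
      · exfalso
        have : ch (List.replicate (j+1) c) = 0 := by
          have := ch_rep' c j []
          rw [← List.replicate_succ'] at this
          simpa [ch] using this
        rw [hj] at hx2; omega
      · have hcd : c ≠ d := fun hh => hdc (by rw [hh])
        have hchd : ch (c :: l) = ch (d :: v) + 1 := by rw [hj, ch_rep c d hcd]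
        have hrd : Rd (d :: (v ++ [h])) := by
          rw [hj] at hx3
          have := (rd_rep (fun hh => hdc hh.symm) (j+1) (v ++ [h])).1 (by simpa using hx3)
          exact this
        -- the long word
        let m := K + N
        let u := List.replicate m d ++ d :: v
        let u' := List.replicate m d ++ d :: (v ++ [h])
        have hu' : u' = u ++ [h] := by simp [u, u']
        have hur : Rd u' := (rd_rep' d m _).2 hrd
        have hu2 : u = d :: (List.replicate m d ++ v) := rep_cons _ _ _
        have hu2' : u' = d :: (List.replicate m d ++ (v ++ [h])) := rep_cons _ _ _
        have hulen : m + 1 ≤ u.length := by simp [u]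
        have hchu : ch u = ch (d :: v) := ch_rep' d m v
        -- extended by perpendicular letters
        have perp : ∀ e : Ltr, e.1 ≠ d.1 → ∀ i,
            f (List.replicate i e ++ (e :: u) ++ [h]) - f (List.replicate i e ++ (e :: u))
            = f (e :: u ++ [h]) - f (e :: u) := by
          intro e he i
          have hed : e ≠ d := fun hh => he (by rw [hh])
          have hce : ch (e :: u) = ch (d :: v) + 1 := by rw [← hchu, hu2, ch_ne hed]
          refine ext1 e u (by omega) (by omega) ?_ (by simp; omega) i
          rw [List.cons_append, ← hu', hu2', rd_ne he, ← hu2']; exact hur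
        have opp : ∀ e : Ltr, e.1 ≠ d.1 → e.2 ≠ d.2 → f (e :: u ++ [h]) - f (e :: u) = 0 := by
          intro e he he2
          rw [← perp e he K, hu2]
          have s1 := hf.sgn (List.replicate K e) e d (List.replicate m d ++ v) (by simp) he he2
          have s2 := hf.sgn (List.replicate K e) e d (List.replicate m d ++ v ++ [h]) (by simp) he he2
          simp only [List.append_assoc, List.cons_append] at s1 s2 ⊢
          rw [s1, s2]; simp
        have both : ∀ e : Ltr, e.1 ≠ d.1 → f (e :: u ++ [h]) - f (e :: u) = 0 := by
          have c1 := hf.cons d _ (hu2' ▸ hur) (by simp [m]; omega)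
          have c2 := hf.cons d (List.replicate m d ++ v)
            (by rw [← hu2]; rw [hu'] at hur; exact List.IsChain.left_of_append hur)
            (by simp [m]; omega)
          rw [← hu2'] at c1
          rw [← hu2] at c2
          have p1 : f (d :: u') = f u' := by
            have := hf.pump (List.replicate m d) d (v ++ [h]) (by simp [m])
            rw [rep_cons] at this; exact this
          have p2 : f (d :: u) = f u := by
            have := hf.pump (List.replicate m d) d v (by simp [m])
            rw [rep_cons] at this; exact this
          have hsum : f ((!d.1, true) :: u') + f ((!d.1, false) :: u') =
            f ((!d.1, true) :: u) + f ((!d.1, false) :: u) := by omega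
          intro e he
          have o := opp (!d.1, !d.2) (by simp) (by simp)
          simp only [List.cons_append, ← hu'] at o ⊢
          rcases e with ⟨e1, e2⟩
          have : e1 = !d.1 := by cases e1 <;> cases hd1 : d.1 <;> simp_all
          subst this
          cases e2 <;> cases hd2 : d.2 <;> simp [hd2] at o <;> omega
        have b := both c (fun hh => hdc hh.symm)
        rw [← perp c (fun hh => hdc hh.symm) (j + K)] at b
        have t := ext1 c l hx1 hx2 hx3 hx4 K
        rw [hj] at t
        have q1 := hf.pumps (List.replicate (j+1+K) c) d v (by simp) m
        have q2 := hf.pumps (List.replicate (j+1+K) c) d (v ++ [h]) (by simp) m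
        have w1 : List.replicate K c ++ (List.replicate (j + 1) c ++ d :: v)
            = List.replicate (j+1+K) c ++ d :: v := by
          rw [← List.append_assoc, List.replicate_append_replicate, Nat.add_comm]
        have w2 : List.replicate (j+K) c ++ (c :: u)
            = List.replicate (j+1+K) c ++ u := by
          rw [rep_cons, ← List.cons_append, ← List.replicate_succ]
          congr 2; omega
        rw [w1] at t
        rw [w2] at b
        simp only [List.append_assoc, List.cons_append] at t b q1 q2 ⊢
        change f (List.replicate (j+1+K) c ++ u') = _ at q2
        change f (List.replicate (j+1+K) c ++ u) = _ at q1
        rw [← hu', q1, q2] at b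
        rw [b] at t
        have e := congrArg (· ++ [h]) hj
        simp only [List.append_assoc, List.cons_append] at e
        rw [e, hj]
        omega

theorem WFlow.stepA' (hf : WFlow K N f) (x v : List Ltr) (h1 : 1 ≤ ch x) (hr : Rd (x ++ v))
    (hN : N ≤ x.length) : f (x ++ v) = f x := by
  have chx : ∀ (y z : List Ltr), ch y ≤ ch (y ++ z) := by
    intro y z
    induction y with
    | nil => simp [ch]
    | cons s y ih =>
      cases y with
      | nil => simp [ch]
      | cons t y => simp only [List.cons_append, ch] at ih ⊢; omega
  induction v using List.reverseRecOn with
  | nil => simp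
  | append_singleton v h ih =>
    rw [← List.append_assoc] at hr ⊢
    rw [hf.stepA h K (x ++ v) (by omega) (h1.trans (chx _ _)) hr (by simp; omega)]
    exact ih (List.IsChain.left_of_append hr)

/-- Step B -/
theorem WFlow.stepB (hf : WFlow K N f) : ∀ (n : ℕ) (w v v' : List Ltr), N ≤ w.length + n → 1 ≤ ch w →
    Rd (w ++ v) → Rd (w ++ v') → N ≤ (w ++ v).length → N ≤ (w ++ v').length →
    f (w ++ v) = f (w ++ v') := by
  intro n
  induction n with
  | zero =>
    intro w v v' h1 h2 h3 h4 _ _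
    rw [hf.stepA' w v h2 h3 (by simpa using h1), hf.stepA' w v' h2 h4 (by simpa using h1)]
  | succ n ih =>
    intro w v v' h1 h2 h3 h4 h5 h6
    cases w with
    | nil => simp [ch] at h2
    | cons c w =>
      have e1 := hf.cons c (w ++ v) h3 h5
      have e2 := hf.cons c (w ++ v') h4 h6
      have st : ∀ t : Ltr, (t = c ∨ t.1 ≠ c.1) → f (t :: c :: (w ++ v)) = f (t :: c :: (w ++ v')) := by
        intro t ht
        have hrd : ∀ z, Rd (c :: w ++ z) → Rd (t :: c :: w ++ z) := by
          intro z hz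
          rcases ht with rfl | ht
          · exact (rd_same _ _).2 hz
          · exact (rd_ne ht _).2 hz
        exact ih (t :: c :: w) v v' (by simp at h1 ⊢; omega) (h2.trans (ch_le_cons _ _))
          (hrd _ h3) (hrd _ h4) (by simp at h5 ⊢; omega) (by simp at h6 ⊢; omega)
      have s1 := st c (Or.inl rfl)
      have s2 := st (!c.1, true) (Or.inr (by simp))
      have s3 := st (!c.1, false) (Or.inr (by simp))
      simp only [List.cons_append]
      omega

/-- Step C -/
theorem WFlow.stepC (hf : WFlow K N f) : ∃ α : Ltr → Ltr → ℤ,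
    (∀ c d : Ltr, c.1 ≠ d.1 → ∀ k v, Rd (d :: v) → N ≤ k + 2 + v.length →
      f (List.replicate (k+1) c ++ d :: v) = α c d) ∧
    (∀ g s c, c.1 ≠ g → α (g, s) c = - α (g, !s) c) ∧
    (∀ g s k, K + N + 1 ≤ k → f (List.replicate k (g, s)) = α (g, s) (!g, !s)) := by
  let A : ℕ → Ltr → Ltr → ℤ := fun k c d => f (List.replicate (k+1) c ++ d :: List.replicate N d)
  have rdd : ∀ (d : Ltr) n, Rd (d :: List.replicate n d) := by
    intro d n
    have := (rd_rep' d n []).2 (by simp [Rd, FreeGroup.IsReduced])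
    rw [rep_cons] at this; simpa using this
  have hA : ∀ c d : Ltr, c.1 ≠ d.1 → ∀ k v, Rd (d :: v) → N ≤ k + 2 + v.length →
      f (List.replicate (k+1) c ++ d :: v) = A k c d := by
    intro c d hcd k v hv hN
    have hne : c ≠ d := fun hh => hcd (by rw [hh])
    have e : ∀ z, List.replicate (k+1) c ++ d :: z = (List.replicate (k+1) c ++ [d]) ++ z := by simp
    have r := (rd_rep hcd (k+1) v).2 hv
    have r' := (rd_rep hcd (k+1) _).2 (rdd d N)
    have hc := ch_rep c d hne k []
    simp only [A]
    rw [e] at r r' ⊢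
    rw [e (List.replicate N d)]
    exact hf.stepB N _ _ _ (by simp) (by omega) r r' (by simp; omega) (by simp; omega)
  have hstep : ∀ c d : Ltr, c.1 ≠ d.1 → ∀ k, A k c d = A (k+1) c d + (A 0 (!c.1, true) c + A 0 (!c.1, false) c) := by
    intro c d hcd k
    have e : List.replicate (k+1) c ++ d :: List.replicate N d =
      c :: (List.replicate k c ++ d :: List.replicate N d) := by simp [List.replicate_succ]
    have r := (rd_rep hcd (k+1) _).2 (rdd d N)
    rw [e] at r
    have c1 := hf.cons c _ r (by simp; omega)
    have p : ∀ b, f ((!c.1, b) :: c :: (List.replicate k c ++ d :: List.replicate N d)) = A 0 (!c.1, b) c := by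
      intro b
      have := hA (!c.1, b) c (by simp) 0 _ r (by simp; omega)
      simpa using this
    rw [p, p, ← e] at c1
    have e2 : c :: (List.replicate (k+1) c ++ d :: List.replicate N d) =
      List.replicate (k+1+1) c ++ d :: List.replicate N d := rfl
    rw [e2] at c1
    simp only [A] at c1 ⊢
    rw [c1]; ring
  have hconst : ∀ c d : Ltr, c.1 ≠ d.1 → A (K+1) c d = A K c d := by
    intro c d hcd
    have := hf.pump (List.replicate K c) c (d :: List.replicate N d) (by simp)
    simp only [A]
    convert this using 2 <;> simp [List.replicate_succ']
  have hz : ∀ c : Ltr, A 0 (!c.1, true) c + A 0 (!c.1, false) c = 0 := by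
    intro c
    have h1 := hstep c (!c.1, true) (by simp) K
    have h2 := hconst c (!c.1, true) (by simp)
    omega
  have hk : ∀ c d : Ltr, c.1 ≠ d.1 → ∀ k, A k c d = A 0 c d := by
    intro c d hcd k
    induction k with
    | zero => rfl
    | succ k ih =>
      have h1 := hstep c d hcd k
      have h2 := hz c
      omega
  refine ⟨A 0, ?_, ?_, ?_⟩
  · intro c d hcd k v hv hN
    rw [hA c d hcd k v hv hN, hk c d hcd]
  · intro g s c hc
    have h2 := hz c
    have : g = !c.1 := Bool.eq_not.2 (fun hh => hc hh.symm)
    subst this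
    cases s <;> simp <;> omega
  · intro g s k hkk
    obtain ⟨j, rfl⟩ : ∃ j, k = j + 1 := ⟨k - 1, by omega⟩
    have := hf.sgn (List.replicate j (g, s)) (g, s) (!g, !s) [] (by simp; omega) (by simp) (by simp)
    rw [List.replicate_succ', ← this]
    have e : List.replicate j (g, s) ++ [(g,s), (!g, !s)] = List.replicate (j+1) (g, s) ++ [(!g,!s)] := by
      rw [List.replicate_succ']; simp
    rw [e, hA (g,s) (!g,!s) (by simp) j [] (by simp [Rd, FreeGroup.IsReduced]) (by omega), hk _ _ (by simp)]

end

/-! ## The sets as conditions on words -/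

structure GoodP (K : ℕ) (Q : List Ltr → Prop) : Prop where
  pump : ∀ (u : List Ltr) (c : Ltr) (x : List Ltr), K ≤ u.length →
    (Q (u ++ c :: c :: x) ↔ Q (u ++ c :: x))
  sgn : ∀ (u : List Ltr) (c e : Ltr) (w : List Ltr), K ≤ u.length → c.1 ≠ e.1 → c.2 ≠ e.2 →
    (Q (u ++ c :: e :: w) ↔ Q (u ++ [c]))
  runs : ∀ (x : List Ltr) (h : Ltr), K ≤ ch x → (Q (x ++ [h]) ↔ Q x)

def consP (t : Ltr) (Q : List Ltr → Prop) : List Ltr → Prop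
  | [] => False
  | s :: l => s = t ∧ Q l

def pre : List Ltr → (List Ltr → Prop) → (List Ltr → Prop)
  | [], Q => Q
  | t :: y, Q => consP t (pre y Q)

theorem consP_good {K : ℕ} {Q : List Ltr → Prop} (h : GoodP K Q) (t : Ltr) :
    GoodP (K+1) (consP t Q) where
  pump u c x hu := by
    cases u with
    | nil => simp at hu
    | cons s u =>
      simp only [List.cons_append, consP]
      rw [h.pump u c x (by simpa using hu)]
  sgn u c e w hu h1 h2 := by
    cases u with
    | nil => simp at hu
    | cons s u =>
      simp only [List.cons_append, consP]
      rw [h.sgn u c e w (by simpa using hu) h1 h2]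
  runs x hh hx := by
    cases x with
    | nil => simp [ch] at hx
    | cons s u =>
      simp only [List.cons_append, consP]
      rw [h.runs u hh (by have := ch_cons_le s u; omega)]

theorem pre_good {K : ℕ} {Q : List Ltr → Prop} (h : GoodP K Q) (y : List Ltr) :
    GoodP (K + y.length) (pre y Q) := by
  induction y with
  | nil => simpa [pre] using h
  | cons t y ih => exact consP_good ih t

theorem pre_iff (y : List Ltr) (Q : List Ltr → Prop) (l : List Ltr) :
    pre y Q l ↔ ∃ l', l = y ++ l' ∧ Q l' := by
  induction y generalizing l with
  | nil => simp [pre]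
  | cons t y ih =>
    cases l with
    | nil => simp [pre, consP]
    | cons s l => simp [pre, consP, ih, and_assoc]

def altP : ℕ → Ltr → Ltr → List Ltr → Prop
  | 0, c, _, l => l.head? = some c
  | _ + 1, _, _, [] => False
  | M + 1, c, d, s :: l => s = c ∧ (altP (M+1) c d l ∨ altP M d c l)

theorem altP_head (M : ℕ) (c d s : Ltr) (l : List Ltr) (h : altP M c d (s :: l)) : s = c := by
  cases M with
  | zero => simpa [altP] using h
  | succ M => rw [altP] at h; exact h.1

theorem altP_nil (M : ℕ) (c d : Ltr) : ¬ altP M c d [] := by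
  cases M <;> simp [altP]

theorem altP_good (M : ℕ) (c d : Ltr) (h1 : c.1 ≠ d.1) (h2 : c.2 = d.2) :
    GoodP (M+1) (altP M c d) where
  pump u s x _ := by
    clear * - h1
    induction u generalizing M c d with
    | nil =>
      cases M with
      | zero => simp [altP]
      | succ M =>
        simp only [List.nil_append]
        rw [altP]
        constructor
        · rintro ⟨rfl, h | h⟩
          · exact h
          · exact absurd (altP_head _ _ _ _ _ h) (fun hh => h1 (by rw [hh]))
        · intro h
          exact ⟨altP_head _ _ _ _ _ h, Or.inl h⟩
    | cons t u ih =>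
      cases M with
      | zero => simp [altP]
      | succ M =>
        simp only [List.cons_append, altP]
        rw [ih (M+1) c d h1, ih M d c h1.symm]
  sgn u s e w hlen g1 g2 := by
    clear hlen
    induction u generalizing M c d with
    | nil =>
      cases M with
      | zero => simp [altP]
      | succ M =>
        simp only [List.nil_append, altP]
        constructor
        · rintro ⟨rfl, h | h⟩
          · exact absurd h.1 (fun hh => g1 (by rw [hh]))
          · exact absurd (altP_head _ _ _ _ _ h) (fun hh => g2 (by rw [hh, h2]))
        · rintro ⟨rfl, h | h⟩
          · exact h.elim
          · exact absurd h (altP_nil _ _ _)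
    | cons t u ih =>
      cases M with
      | zero => simp [altP]
      | succ M =>
        simp only [List.cons_append, altP]
        rw [ih (M+1) c d h1 h2, ih M d c h1.symm h2.symm]
  runs x h hx := by
    clear h2
    induction x generalizing M c d with
    | nil => simp [ch] at hx
    | cons s x ih =>
      cases M with
      | zero => simp [altP]
      | succ M =>
        simp only [List.cons_append, altP]
        cases x with
        | nil => simp [ch] at hx
        | cons t x =>
          refine and_congr_right ?_
          rintro rfl
          by_cases hst : s = t
          · subst hst
            rw [ch_same] at hx
            rw [ih (M+1) s d h1 hx]
            have hd : ∀ l, ¬ altP M d s (s :: l) := fun l hl =>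
              h1 (by rw [← altP_head _ _ _ _ _ hl])
            simp [hd]
          · rw [ch_ne hst] at hx
            rw [ih M d s h1.symm (by omega)]
            have hd : ∀ l, ¬ altP (M+1) s d (t :: l) := fun l hl =>
              hst (altP_head _ _ _ _ _ hl).symm
            simp [hd]

theorem altP_succ (M : ℕ) (c d : Ltr) (l : List Ltr) :
    altP (M+1) c d l ↔ ∃ k, ∃ l', l = List.replicate (k+1) c ++ l' ∧ altP M d c l' := by
  induction l with
  | nil => simp [altP]
  | cons s l ih =>
    rw [altP, ih]
    constructor
    · rintro ⟨rfl, ⟨k, l', rfl, h⟩ | h⟩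
      · exact ⟨k+1, l', rfl, h⟩
      · exact ⟨0, l, rfl, h⟩
    · rintro ⟨k, l', h, h'⟩
      rw [List.replicate_succ, List.cons_append, List.cons.injEq] at h
      refine ⟨h.1, ?_⟩
      cases k with
      | zero => right; rw [h.2]; simpa using h'
      | succ k => left; exact ⟨k, l', h.2, h'⟩

/-- word version of `altProd` -/
def altW : Ltr → Ltr → List ℕ → List Ltr
  | _, _, [] => []
  | c, d, k :: ks => List.replicate k c ++ altW d c ks

def zz (c d : Ltr) (M : ℕ) : Ltr := if M % 2 = 1 then d else c

theorem zz_succ (c d : Ltr) (M : ℕ) : zz c d (M+1) = zz d c M := by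
  unfold zz
  split_ifs <;> first | rfl | omega

theorem altP_iff (M : ℕ) (c d : Ltr) (l : List Ltr) :
    altP M c d l ↔ ∃ ks : List ℕ, (ks.length = M ∧ ∀ k ∈ ks, 1 ≤ k) ∧
      altW c d ks ++ [zz c d M] <+: l := by
  induction M generalizing c d l with
  | zero =>
    cases l with
    | nil => simp [altP]
    | cons s l =>
      simp only [altP, zz, List.head?_cons, Option.some.injEq]
      constructor
      · rintro rfl
        exact ⟨[], by simp, by simp [altW]⟩
      · rintro ⟨ks, ⟨h, _⟩, h2⟩
        rw [List.length_eq_zero_iff] at h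
        subst h
        simp [altW] at h2
        exact h2.symm
  | succ M ih =>
    rw [altP_succ]
    constructor
    · rintro ⟨k, l', rfl, h⟩
      obtain ⟨ks, ⟨h1, h2⟩, h3⟩ := (ih _ _ _).1 h
      refine ⟨(k+1) :: ks, ⟨by simp [h1], by simpa using h2⟩, ?_⟩
      rw [zz_succ, altW, List.append_assoc]
      exact (List.prefix_append_right_inj _).2 h3
    · rintro ⟨ks, ⟨h1, h2⟩, h3⟩
      cases ks with
      | nil => simp at h1
      | cons k ks =>
        obtain ⟨j, rfl⟩ : ∃ j, k = j + 1 := ⟨k - 1, by have := h2 k (by simp); omega⟩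
        rw [zz_succ, altW, List.append_assoc] at h3
        obtain ⟨r, rfl⟩ := h3
        refine ⟨j, (altW d c ks ++ [zz d c M]) ++ r, by simp, (ih _ _ _).2 ⟨ks, ⟨by simpa using h1, ?_⟩, by simp⟩⟩
        intro k hk; exact h2 k (by simp [hk])

theorem altW_rd (c d : Ltr) (h : c.1 ≠ d.1) (ks : List ℕ) (hk : ∀ k ∈ ks, 1 ≤ k) :
    ∃ v, altW c d ks ++ [zz c d ks.length] = c :: v ∧ Rd (c :: v) := by
  induction ks generalizing c d with
  | nil => exact ⟨[], by simp [altW, zz], by simp [Rd]⟩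
  | cons k ks ih =>
    obtain ⟨v, hv, hr⟩ := ih d c h.symm (fun k hk' => hk k (by simp [hk']))
    obtain ⟨j, rfl⟩ : ∃ j, k = j + 1 := ⟨k - 1, by have := hk k (by simp); omega⟩
    refine ⟨List.replicate j c ++ d :: v, ?_, ?_⟩
    · rw [List.length_cons, zz_succ, altW, List.append_assoc, hv]; rfl
    · exact (rd_rep h (j+1) v).2 hr

/-! ## Bridging with the free group -/

theorem toWord_mk_rd {l : List Ltr} (h : Rd l) : (FreeGroup.mk l : F₂).toWord = l := by
  rw [FreeGroup.toWord_mk]; exact h.reduce_eq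

theorem mem_cyl (t x : F₂) : x ∈ cyl t ↔ t.toWord <+: x.toWord := by
  constructor
  · rintro ⟨y, rfl, h⟩
    have := (FreeGroup.toWord_mul_sublist t y).eq_of_length (by simpa [wl] using h)
    rw [this]; exact List.prefix_append _ _
  · rintro ⟨r, hr⟩
    have hrr : Rd r := by
      have hx : Rd x.toWord := FreeGroup.isReduced_toWord
      rw [← hr] at hx
      exact List.IsChain.right_of_append hx
    refine ⟨FreeGroup.mk r, ?_, ?_⟩
    · have h := (FreeGroup.mk_toWord (x := x)).symm
      rw [← hr, ← FreeGroup.mul_mk, FreeGroup.mk_toWord] at h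
      exact h
    · unfold wl; rw [toWord_mk_rd hrr, ← hr]; simp

theorem mk_rep (c : Ltr) (k : ℕ) : (FreeGroup.mk [c] : F₂) ^ k = FreeGroup.mk (List.replicate k c) := by
  induction k with
  | zero => rfl
  | succ k ih => rw [pow_succ, ih, FreeGroup.mul_mk, List.replicate_succ']

theorem altProd_mk (c d : Ltr) (ks : List ℕ) :
    altProd (FreeGroup.mk [c]) (FreeGroup.mk [d]) ks = FreeGroup.mk (altW c d ks) := by
  induction ks generalizing c d with
  | nil => rfl
  | cons k ks ih => rw [altProd, altW, ih, mk_rep, FreeGroup.mul_mk]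

theorem mem_Ncd (c d : Ltr) (h : c.1 ≠ d.1) (y : F₂) (M : ℕ)
    (hy : wl (y * FreeGroup.mk [c]) = wl y + 1) (x : F₂) :
    (x ∈ ⋃ ks ∈ {l : List ℕ | l.length = M ∧ ∀ k ∈ l, 1 ≤ k},
      cyl (y * altProd (FreeGroup.mk [c]) (FreeGroup.mk [d]) ks *
        (if M % 2 = 1 then FreeGroup.mk [d] else FreeGroup.mk [c]))) ↔
    pre y.toWord (altP M c d) x.toWord := by
  have hyc : Rd (y.toWord ++ [c]) := by
    have hl : (FreeGroup.mk [c] : F₂).toWord = [c] := toWord_mk_rd (by simp [Rd])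
    have := (FreeGroup.toWord_mul_sublist y (FreeGroup.mk [c])).eq_of_length
      (by rw [hl]; simpa [wl] using hy)
    rw [hl] at this
    rw [← this]; exact FreeGroup.isReduced_toWord
  have key : ∀ ks : List ℕ, (ks.length = M ∧ ∀ k ∈ ks, 1 ≤ k) →
      (y * altProd (FreeGroup.mk [c]) (FreeGroup.mk [d]) ks *
        (if M % 2 = 1 then FreeGroup.mk [d] else FreeGroup.mk [c]) : F₂).toWord =
      y.toWord ++ (altW c d ks ++ [zz c d M]) := by
    rintro ks ⟨rfl, hk⟩
    have e : (if ks.length % 2 = 1 then FreeGroup.mk [d] else FreeGroup.mk [c] : F₂) =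
      FreeGroup.mk [zz c d ks.length] := by unfold zz; split_ifs <;> rfl
    rw [e, altProd_mk]
    conv_lhs => rw [← FreeGroup.mk_toWord (x := y)]
    rw [FreeGroup.mul_mk, FreeGroup.mul_mk, List.append_assoc]
    apply toWord_mk_rd
    obtain ⟨v, hv, hr⟩ := altW_rd c d h ks hk
    rw [hv]
    have := FreeGroup.IsReduced.append_overlap hyc (L₃ := v) hr (by simp)
    simpa using this
  simp only [Set.mem_iUnion, Set.mem_ofPred_eq, mem_cyl, pre_iff, exists_prop]
  constructor
  · rintro ⟨ks, hks, hp⟩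
    rw [key ks hks] at hp
    obtain ⟨r, hr⟩ := hp
    exact ⟨(altW c d ks ++ [zz c d M]) ++ r, by rw [← hr]; simp, (altP_iff _ _ _ _).2 ⟨ks, hks, by simp⟩⟩
  · rintro ⟨l', hl, hP⟩
    obtain ⟨ks, hks, hp⟩ := (altP_iff _ _ _ _).1 hP
    refine ⟨ks, hks, ?_⟩
    rw [key ks hks, hl]
    exact (List.prefix_append_right_inj _).2 hp

theorem ga_eq : ga = FreeGroup.mk [(true, true)] := rfl
theorem gb_eq : gb = FreeGroup.mk [(false, true)] := rfl
theorem ga_inv_eq : ga⁻¹ = FreeGroup.mk [(true, false)] := rfl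
theorem gb_inv_eq : gb⁻¹ = FreeGroup.mk [(false, false)] := rfl

theorem fam_good (S : Set F₂) (hS : S ∈ Nfam ∪ Mfam) :
    ∃ (Q : List Ltr → Prop) (K : ℕ), GoodP K Q ∧ ∀ x : F₂, x ∈ S ↔ Q x.toWord := by
  have key : ∀ c d : Ltr, c.1 ≠ d.1 → c.2 = d.2 → S ∈ Ncd (FreeGroup.mk [c]) (FreeGroup.mk [d]) →
      ∃ (Q : List Ltr → Prop) (K : ℕ), GoodP K Q ∧ ∀ x : F₂, x ∈ S ↔ Q x.toWord := by
    rintro c d h1 h2 ⟨y, M, _, hy, rfl⟩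
    exact ⟨_, _, pre_good (altP_good M c d h1 h2) y.toWord, fun x => mem_Ncd c d h1 y M hy x⟩
  rcases hS with ⟨t, _, rfl⟩ | ((hS | hS) | hS) | hS
  · refine ⟨pre t.toWord (fun _ => True), _, pre_good (K := 0) ⟨by simp, by simp, by simp⟩ _, ?_⟩
    intro x
    rw [mem_cyl, pre_iff]
    constructor
    · rintro ⟨r, hr⟩; exact ⟨r, hr.symm, trivial⟩
    · rintro ⟨r, hr, _⟩; exact ⟨r, hr.symm⟩
  · exact key (true, true) (false, true) (by simp) rfl hS
  · exact key (false, true) (true, true) (by simp) rfl hS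
  · exact key (true, false) (false, false) (by simp) rfl hS
  · exact key (false, false) (true, false) (by simp) rfl hS

theorem GoodK.mono {K K' : ℕ} {f : List Ltr → ℤ} (h : GoodK K f) (hK : K ≤ K') : GoodK K' f where
  pump u c x hu := h.pump u c x (hK.trans hu)
  sgn u c e w hu := h.sgn u c e w (hK.trans hu)
  runs x hh hx := h.runs x hh (hK.trans hx)

theorem comb_good (p : F₂ → ℤ) (hp : ∃ (n : ℕ) (c : Fin n → ℤ) (S : Fin n → Set F₂),
      (∀ i, S i ∈ Nfam ∪ Mfam) ∧ p = ∑ i, c i • ind (S i)) :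
    ∃ (f : List Ltr → ℤ) (K : ℕ), GoodK K f ∧ ∀ x : F₂, p x = f x.toWord := by
  classical
  obtain ⟨n, c, S, hS, rfl⟩ := hp
  choose Q K hQ hSQ using fun i => fam_good (S i) (hS i)
  refine ⟨fun l => ∑ i, c i * (if Q i l then 1 else 0), ∑ i, K i, ?_, ?_⟩
  · have hK : ∀ i, K i ≤ ∑ i, K i := fun i => Finset.single_le_sum (fun _ _ => Nat.zero_le _) (Finset.mem_univ i)
    constructor
    · intro u s x hu
      refine Finset.sum_congr rfl fun i _ => ?_
      simp only [(hQ i).pump u s x ((hK i).trans hu)]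
    · intro u s e w hu h1 h2
      refine Finset.sum_congr rfl fun i _ => ?_
      simp only [(hQ i).sgn u s e w ((hK i).trans hu) h1 h2]
    · intro x h hx
      refine Finset.sum_congr rfl fun i _ => ?_
      simp only [(hQ i).runs x h ((hK i).trans hx)]
  · intro x
    rw [Finset.sum_apply]
    refine Finset.sum_congr rfl fun i _ => ?_
    simp [ind, Set.indicator_apply, hSQ i x]

/-! ## The flow attached to `p` and `q` -/

def phi (f : Bool → List Ltr → ℤ) : List Ltr → ℤ
  | [] => 0
  | (g, true) :: l => f g l
  | (g, false) :: l => - f g ((g, false) :: l)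

theorem phi_good {K : ℕ} {f : Bool → List Ltr → ℤ} (h : ∀ g, GoodK K (f g)) :
    GoodK (K+1) (phi f) where
  pump u c x hu := by
    cases u with
    | nil => simp at hu
    | cons s u =>
      obtain ⟨g, e⟩ := s
      have hu' : K ≤ u.length := by simpa using hu
      cases e
      · have := (h g).pump ((g, false) :: u) c x (by simp; omega)
        simp only [List.cons_append, phi] at this ⊢
        rw [this]
      · exact (h g).pump u c x hu'
  sgn u c e w hu h1 h2 := by
    cases u with
    | nil => simp at hu
    | cons s u =>
      obtain ⟨g, b⟩ := s
      have hu' : K ≤ u.length := by simpa using hu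
      cases b
      · have := (h g).sgn ((g, false) :: u) c e w (by simp; omega) h1 h2
        simp only [List.cons_append, phi] at this ⊢
        rw [this]
      · exact (h g).sgn u c e w hu' h1 h2
  runs x t hx := by
    cases x with
    | nil => simp [ch] at hx
    | cons s u =>
      obtain ⟨g, b⟩ := s
      have hu' : K ≤ ch u := by have := ch_cons_le (g, b) u; omega
      cases b
      · have := (h g).runs ((g, false) :: u) t (by omega)
        simp only [List.cons_append, phi] at this ⊢
        rw [this]
      · exact (h g).runs u t hu'

theorem finSupp_iff (f : F₂ → ℤ) : FinSupp f ↔ ∃ T : ℕ, ∀ x : F₂, T ≤ x.toWord.length → f x = 0 := by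
  constructor
  · intro h
    obtain ⟨T, hT⟩ := (h.image (fun x : F₂ => x.toWord.length)).bddAbove
    refine ⟨T + 1, fun x hx => ?_⟩
    by_contra hne
    have := hT (Set.mem_image_of_mem (fun x : F₂ => x.toWord.length) (show x ∈ Function.support f from hne))
    omega
  · rintro ⟨T, hT⟩
    have : {l : List Ltr | l.length < T}.Finite := List.finite_length_lt Ltr T
    refine (this.preimage (f := (FreeGroup.toWord : F₂ → List Ltr))
      FreeGroup.toWord_injective.injOn).subset ?_
    intro x hx
    by_contra hne
    simp only [Set.mem_preimage, Set.mem_ofPred_eq, not_lt] at hne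
    exact hx (hT x hne)

theorem inv_mul_mk (g : Bool) (l : List Ltr) :
    (FreeGroup.mk [(g, false)] : F₂) * FreeGroup.mk l = FreeGroup.mk ((g, false) :: l) := by
  rw [FreeGroup.mul_mk]; rfl

theorem inv_mul_mk_cancel (g : Bool) (l : List Ltr) :
    (FreeGroup.mk [(g, false)] : F₂) * FreeGroup.mk ((g, true) :: l) = FreeGroup.mk l := by
  have h1 : (FreeGroup.mk ((g, true) :: l) : F₂) = FreeGroup.mk [(g, true)] * FreeGroup.mk l := by
    rw [FreeGroup.mul_mk]; rfl
  have h2 : (FreeGroup.mk [(g, false)] : F₂) = (FreeGroup.mk [(g, true)])⁻¹ := rfl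
  rw [h1, h2, inv_mul_cancel_left]

theorem phi_flow {K : ℕ} {f : Bool → List Ltr → ℤ} (h : ∀ g, GoodK K (f g)) (p q : F₂ → ℤ)
    (hp : ∀ x, p x = f true x.toWord) (hq : ∀ x, q x = f false x.toWord)
    (hD : FinSupp ((p + q) - (tr ga p + tr gb q))) : ∃ N, WFlow (K+1) N (phi f) := by
  obtain ⟨N, hN⟩ := (finSupp_iff _).1 hD
  refine ⟨N, { phi_good h with cons := ?_ }⟩
  intro s l hr hl
  have hw := toWord_mk_rd hr
  have e := hN (FreeGroup.mk (s :: l)) (by rw [hw]; exact hl)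
  simp only [Pi.sub_apply, Pi.add_apply, tr, ga_inv_eq, gb_inv_eq] at e
  have hcan : ∀ g, s = (g, true) → ((FreeGroup.mk [(g, false)] : F₂) * FreeGroup.mk (s :: l)).toWord = l := by
    rintro g rfl
    rw [inv_mul_mk_cancel]; exact toWord_mk_rd (rd_tail hr)
  have hcan2 : ∀ g, s ≠ (g, true) →
      ((FreeGroup.mk [(g, false)] : F₂) * FreeGroup.mk (s :: l)).toWord = (g, false) :: s :: l := by
    intro g hs
    rw [inv_mul_mk]
    apply toWord_mk_rd
    rw [Rd, FreeGroup.isReduced_cons_cons]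
    refine ⟨?_, hr⟩
    rintro rfl
    obtain ⟨s1, s2⟩ := s
    cases s2 <;> simp_all
  rw [hp, hp, hq, hq, hw] at e
  obtain ⟨g, b⟩ := s
  cases g <;> cases b
  · rw [hcan2 true (by simp), hcan2 false (by simp)] at e
    simp only [phi, Bool.not_false]; omega
  · rw [hcan2 true (by simp), hcan false rfl] at e
    simp only [phi, Bool.not_false]; omega
  · rw [hcan2 true (by simp), hcan2 false (by simp)] at e
    simp only [phi, Bool.not_true]; omega
  · rw [hcan true rfl, hcan2 false (by simp)] at e
    simp only [phi, Bool.not_true]; omega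

/-! ## The two special sets -/

def Rw (g : Bool) : List Ltr → Prop
  | [] => False
  | (g', b) :: l => if g' = g then (if b then Rw g l else (l = [] ∨ Rw g l)) else b = true

def RS (g : Bool) : Set F₂ :=
  cyl (FreeGroup.mk [(!g, true)]) ∪
    (⋃ k ∈ {k : ℕ | 1 ≤ k}, cyl ((FreeGroup.mk [(g, true)]) ^ k * (FreeGroup.mk [(!g, true)]))) ∪
    (cyl (FreeGroup.mk [(g, false)]) \
      ⋃ k ∈ {k : ℕ | 1 ≤ k}, cyl ((FreeGroup.mk [(g, false)]) ^ k * (FreeGroup.mk [(!g, false)])))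

theorem Rset_eq : Rset = RS true := rfl
theorem Rset'_eq : Rset' = RS false := rfl

theorem mem_cyl1 (c : Ltr) (x : F₂) : x ∈ cyl (FreeGroup.mk [c]) ↔ x.toWord.head? = some c := by
  rw [mem_cyl, toWord_mk_rd (by simp [Rd])]
  cases x.toWord with
  | nil => simp
  | cons s l => simp [eq_comm]

theorem mem_union1 (c d : Ltr) (h : c.1 ≠ d.1) (x : F₂) :
    x ∈ (⋃ k ∈ {k : ℕ | 1 ≤ k}, cyl ((FreeGroup.mk [c]) ^ k * (FreeGroup.mk [d]))) ↔
      altP 1 c d x.toWord := by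
  have key : ∀ k, ((FreeGroup.mk [c]) ^ k * (FreeGroup.mk [d]) : F₂).toWord = List.replicate k c ++ [d] := by
    intro k
    rw [mk_rep, FreeGroup.mul_mk]
    exact toWord_mk_rd ((rd_rep h k []).2 (by simp [Rd]))
  simp only [Set.mem_iUnion, Set.mem_ofPred_eq, mem_cyl, key, exists_prop]
  rw [altP_succ]
  constructor
  · rintro ⟨k, hk, r, hr⟩
    refine ⟨k - 1, d :: r, ?_, by simp [altP]⟩
    rw [← hr, Nat.sub_add_cancel hk]; simp
  · rintro ⟨k, l', hl, hl'⟩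
    refine ⟨k+1, by omega, ?_⟩
    rw [hl]
    refine (List.prefix_append_right_inj _).2 ?_
    cases l' with
    | nil => simp [altP] at hl'
    | cons s l' => simp [altP] at hl'; simp [hl']

theorem Rw_iff (g : Bool) (l : List Ltr) (hr : Rd l) :
    ((l.head? = some (!g, true) ∨ altP 1 (g, true) (!g, true) l) ∨
      (l.head? = some (g, false) ∧ ¬ altP 1 (g, false) (!g, false) l)) ↔ Rw g l := by
  induction l with
  | nil => simp [Rw, altP]
  | cons s l ih =>
    have ih := ih (rd_tail hr)
    obtain ⟨g', b⟩ := s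
    by_cases hg : g' = g
    · subst hg
      cases b
      · simp only [Rw, ← ih, altP]
        cases l with
        | nil => simp [altP]
        | cons t l =>
          obtain ⟨t1, t2⟩ := t
          rw [Rd, FreeGroup.isReduced_cons_cons] at hr
          have := hr.1
          cases t2 <;> cases t1 <;> cases g' <;> simp_all [altP]
      · simp only [Rw, ← ih, altP]
        cases l with
        | nil => simp [altP]
        | cons t l =>
          obtain ⟨t1, t2⟩ := t
          rw [Rd, FreeGroup.isReduced_cons_cons] at hr
          have := hr.1
          cases t2 <;> cases t1 <;> cases g' <;> simp_all [altP]
    · have : g' = !g := Bool.eq_not.2 hg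
      subst this
      cases b <;> simp [Rw, altP]

theorem mem_RS (g : Bool) (x : F₂) : x ∈ RS g ↔ Rw g x.toWord := by
  rw [← Rw_iff g _ FreeGroup.isReduced_toWord, RS, Set.mem_union, Set.mem_union, Set.mem_sdiff,
    mem_cyl1, mem_cyl1, mem_union1 _ _ (by simp), mem_union1 _ _ (by simp)]

theorem Rw_rep (g s e : Bool) (k : ℕ) (v : List Ltr) :
    Rw g (List.replicate k (g, s) ++ (!g, e) :: v) ↔ e = true := by
  induction k with
  | zero => simp [Rw]
  | succ k ih =>
    rw [List.replicate_succ, List.cons_append, Rw, ih]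
    cases s <;> simp

theorem Rw_rep2 (g s : Bool) (k : ℕ) :
    Rw g (List.replicate (k+1) (g, s)) ↔ s = false := by
  induction k with
  | zero => cases s <;> simp [Rw]
  | succ k ih =>
    rw [List.replicate_succ, Rw, ih]
    cases s <;> simp

theorem RS_shift (g : Bool) (x : F₂) (hx : 1 ≤ x.toWord.length) :
    ((FreeGroup.mk [(g, false)] : F₂) * x ∈ RS g ↔ x ∈ RS g) := by
  rw [mem_RS, mem_RS]
  have hr : Rd x.toWord := FreeGroup.isReduced_toWord
  have hm : FreeGroup.mk x.toWord = x := FreeGroup.mk_toWord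
  generalize x.toWord = w at hx hr hm
  subst hm
  cases w with
  | nil => simp at hx
  | cons s l =>
    by_cases hs : s = (g, true)
    · subst hs
      rw [inv_mul_mk_cancel, toWord_mk_rd (rd_tail hr)]
      simp [Rw]
    · rw [inv_mul_mk, toWord_mk_rd]
      · simp [Rw]
      · rw [Rd, FreeGroup.isReduced_cons_cons]
        refine ⟨?_, hr⟩
        rintro rfl
        obtain ⟨s1, s2⟩ := s
        cases s2 <;> simp_all

/-! ## Conclusion -/

open Classical in
theorem ind_RS (g : Bool) (x : F₂) : ind (RS g) x = if Rw g x.toWord then 1 else 0 := by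
  simp only [ind, Set.indicator_apply, mem_RS, Pi.one_apply]

theorem conclude {K N : ℕ} {f : Bool → List Ltr → ℤ} (hf : WFlow K N (phi f)) (g : Bool) (p : F₂ → ℤ)
    (hp : ∀ x, p x = f g x.toWord) :
    ∃ n m : ℤ, FinSupp (p - (n • (1 : F₂ → ℤ) + m • ind (RS g))) := by
  classical
  obtain ⟨α, h1, h2, h3⟩ := hf.stepC
  refine ⟨α (g, true) (!g, false), α (g, true) (!g, true) - α (g, true) (!g, false), ?_⟩
  rw [finSupp_iff]
  refine ⟨K + N + 2, fun x hx => ?_⟩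
  have hr : Rd x.toWord := FreeGroup.isReduced_toWord
  simp only [Pi.sub_apply, Pi.add_apply, Pi.smul_apply, Pi.one_apply, smul_eq_mul, mul_one, ind_RS, hp]
  generalize x.toWord = w at hx hr
  -- value on words whose first foreign letter is `(!g, e)`
  have hval : ∀ e : Bool, α (g, true) (!g, e) = α (g, true) (!g, false) +
      (α (g, true) (!g, true) - α (g, true) (!g, false)) * (if e = true then 1 else 0) := by
    intro e; cases e <;> simp
  cases w with
  | nil => simp at hx
  | cons s l =>
    obtain ⟨g', b⟩ := s
    by_cases hg : g' = g
    · subst hg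
      obtain ⟨k, hk | ⟨d, v, hd, hk⟩⟩ := run_decomp (g', b) l hr
      · rw [hk] at hx ⊢
        simp only [Rw_rep2]
        simp only [List.length_replicate] at hx
        cases b
        · have e := h3 g' false (k+1) (by omega)
          rw [List.replicate_succ, phi, ← List.replicate_succ] at e
          have e2 := h2 g' true (!g', true) (by simp)
          simp at e e2 ⊢; omega
        · have e := h3 g' true (k+2) (by omega)
          rw [List.replicate_succ, phi] at e
          simp at e ⊢; omega
      · obtain ⟨d1, e⟩ := d
        have : d1 = !g' := Bool.eq_not.2 hd
        subst this
        have hrv : Rd ((!g', e) :: v) := by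
          rw [hk] at hr; exact (rd_rep (by simp) _ _).1 hr
        rw [hk] at hx ⊢
        simp only [Rw_rep]
        rw [← hval e]
        simp at hx
        cases b
        · have e1 := h1 (g', false) (!g', e) (by simp) k v hrv (by omega)
          rw [List.replicate_succ, List.cons_append, phi, ← List.cons_append, ← List.replicate_succ] at e1
          have e2 := h2 g' true (!g', e) (by simp)
          simp only [Bool.not_true] at e2; omega
        · have e1 := h1 (g', true) (!g', e) (by simp) (k+1) v hrv (by omega)
          rw [List.replicate_succ, List.cons_append, phi] at e1
          omega
    · have : g' = !g := Bool.eq_not.2 hg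
      subst this
      have e1 := h1 (g, true) (!g, b) (by simp) 0 l hr (by simp at hx; omega)
      have hw : Rw g ((!g, b) :: l) ↔ b = true := Rw_rep g true b 0 l
      simp only [hw]
      rw [← hval b]
      simp [phi] at e1
      omega

theorem wl_shift (g : Bool) (x : F₂) :
    x.toWord.length ≤ ((FreeGroup.mk [(g, false)] : F₂) * x).toWord.length + 1 := by
  have h := FreeGroup.norm_mul_le (FreeGroup.mk [(g, true)] : F₂) ((FreeGroup.mk [(g, false)] : F₂) * x)
  have h2 : (FreeGroup.mk [(g, true)] : F₂) * ((FreeGroup.mk [(g, false)] : F₂) * x) = x := by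
    have : (FreeGroup.mk [(g, false)] : F₂) = (FreeGroup.mk [(g, true)])⁻¹ := rfl
    rw [this, mul_inv_cancel_left]
  have h3 : FreeGroup.norm (FreeGroup.mk [(g, true)] : F₂) = 1 := FreeGroup.norm_of g
  rw [h2, h3] at h
  simp only [FreeGroup.norm] at h
  omega

theorem shift_back (g : Bool) (p : F₂ → ℤ) (n m : ℤ)
    (h : FinSupp (p - (n • (1 : F₂ → ℤ) + m • ind (RS g)))) :
    ∃ T : ℕ, ∀ x : F₂, T ≤ x.toWord.length → p x = p ((FreeGroup.mk [(g, false)] : F₂) * x) := by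
  classical
  obtain ⟨T, hT⟩ := (finSupp_iff _).1 h
  refine ⟨T + 1, fun x hx => ?_⟩
  have a1 := hT x (by omega)
  have a2 := hT ((FreeGroup.mk [(g, false)] : F₂) * x) (by have := wl_shift g x; omega)
  have a3 : ind (RS g) ((FreeGroup.mk [(g, false)] : F₂) * x) = ind (RS g) x := by
    simp only [ind, Set.indicator_apply, RS_shift g x (by omega)]; rfl
  simp only [Pi.sub_apply, Pi.add_apply, Pi.smul_apply, Pi.one_apply] at a1 a2
  rw [a3] at a2
  omega

/-- If `p` and `q` are finite ℤ-linear combinations of indicator functions of sets in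
`𝒩 ∪ 𝓜`, then `(p + q) - (a·p + b·q)` is finitely supported iff, up to finitely supported
functions, `p = n·1 + m·1_R` and `q = k·1 + l·1_{R'}` for integers `n, m, k, l`. -/
theorem stmt_2 (p q : F₂ → ℤ)
    (hp : ∃ (n : ℕ) (c : Fin n → ℤ) (S : Fin n → Set F₂),
      (∀ i, S i ∈ Nfam ∪ Mfam) ∧ p = ∑ i, c i • ind (S i))
    (hq : ∃ (m : ℕ) (d : Fin m → ℤ) (T : Fin m → Set F₂),
      (∀ j, T j ∈ Nfam ∪ Mfam) ∧ q = ∑ j, d j • ind (T j)) :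
    FinSupp ((p + q) - (tr ga p + tr gb q)) ↔
      ∃ n m k l : ℤ,
        FinSupp (p - (n • (1 : F₂ → ℤ) + m • ind Rset)) ∧
        FinSupp (q - (k • (1 : F₂ → ℤ) + l • ind Rset')) := by
  rw [Rset_eq, Rset'_eq]
  constructor
  · intro hD
    obtain ⟨f₁, K₁, hf₁, hp⟩ := comb_good p hp
    obtain ⟨f₂, K₂, hf₂, hq⟩ := comb_good q hq
    let f : Bool → List Ltr → ℤ := fun g => if g then f₁ else f₂
    have hf : ∀ g, GoodK (K₁ + K₂) (f g) := by
      intro g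
      cases g
      · exact hf₂.mono (by omega)
      · exact hf₁.mono (by omega)
    obtain ⟨N, hN⟩ := phi_flow hf p q hp hq hD
    obtain ⟨n, m, h1⟩ := conclude hN true p hp
    obtain ⟨k, l, h2⟩ := conclude hN false q hq
    exact ⟨n, m, k, l, h1, h2⟩
  · rintro ⟨n, m, k, l, h1, h2⟩
    obtain ⟨T₁, hT₁⟩ := shift_back true p n m h1
    obtain ⟨T₂, hT₂⟩ := shift_back false q k l h2
    rw [finSupp_iff]
    refine ⟨T₁ + T₂, fun x hx => ?_⟩
    simp only [Pi.sub_apply, Pi.add_apply, tr, ga_inv_eq, gb_inv_eq]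
    rw [← hT₁ x (by omega), ← hT₂ x (by omega)]
    ring
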